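/- Let μ, ν be finite positive measures on (Ω, F) with ν ≪ μ. Then the net (f_π(μ))_π, indexed by all finite measurable partitions π of Ω ordered by refinement, converges to dν/dμ in L¹(μ): for every ε > 0 there exists a finite measurable partition π₀ such that for every finite measurable partition π refining π₀ one has ∫_Ω |f_π(μ) − dν/dμ| dμ < ε. -/

import Mathlib

/-!
Let `g = dν/dμ`, so that `f_π` is on each piece `A` of `π` the average of `g` over `A`. Choose a
simple function `s` with `∫ |g - s| dμ < ε / 2` and let `π₀` be the partition into fibres of `s`.
If `π` refines `π₀`, then `s` is constant on each piece `A` of `π`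
(`exists_const_of_refines`), and for any constant `c` the deviation of `g` from its average over
`A` satisfies `∫_A |avg - g| ≤ 2 ∫_A |g - c|` (`setIntegral_abs_average_sub_le`). Summing over the
pieces gives `∫ |f_π - g| dμ ≤ 2 ∫ |g - s| dμ < ε`.
-/

open MeasureTheory Set
open scoped ENNReal Classical

/-- A finite measurable partition of `Ω`: a finite collection of pairwise disjoint measurable
sets whose union is `Ω`. -/
def IsFinitePartition {Ω : Type*} [MeasurableSpace Ω] (π : Finset (Set Ω)) : Prop :=
  (∀ A ∈ π, MeasurableSet A) ∧
    (π : Set (Set Ω)).PairwiseDisjoint id ∧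
    ⋃₀ (π : Set (Set Ω)) = Set.univ

/-- `π'` refines `π` if every element of `π` is a union of elements of `π'`. -/
def Refines {Ω : Type*} (π' π : Finset (Set Ω)) : Prop :=
  ∀ A ∈ π, ∃ S ⊆ π', A = ⋃₀ (S : Set (Set Ω))

/-- `f_π(μ) := Σ_{A ∈ π, μ(A) > 0} 1_A ⬝ ν(A)/μ(A)`. -/
noncomputable def partFn {Ω : Type*} [MeasurableSpace Ω] (ν lam : Measure Ω)
    (π : Finset (Set Ω)) (x : Ω) : ℝ :=
  ∑ A ∈ π, if lam A ≠ 0 ∧ x ∈ A then (ν A).toReal / (lam A).toReal else 0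

/-- On a piece `A` of the partition the condition `lam A ≠ 0` is immaterial: division by zero
already yields `0`. -/
lemma partFn_eq_of_mem {Ω : Type*} [MeasurableSpace Ω] (ν lam : Measure Ω) {π : Finset (Set Ω)}
    (hπ : IsFinitePartition π) {A : Set Ω} (hA : A ∈ π) {x : Ω} (hx : x ∈ A) :
    partFn ν lam π x = (ν A).toReal / (lam A).toReal := by
  unfold partFn
  rw [Finset.sum_eq_single_of_mem A hA]
  · by_cases h : lam A = 0 <;> simp [h, hx]
  · intro B hB hBA
    have hxB : x ∉ B := fun hxB => Set.disjoint_left.1 (hπ.2.1 hB hA hBA) hxB hx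
    simp [hxB]

/-- The deviation of `g` from its average `a` over `A` is at most twice its deviation from any
constant `c`: integrating `g - c` gives `μ A * |a - c| ≤ ∫_A |g - c|`. -/
lemma setIntegral_abs_average_sub_le {Ω : Type*} [MeasurableSpace Ω] (μ : Measure Ω)
    [IsFiniteMeasure μ] {g : Ω → ℝ} (hg : Integrable g μ) (A : Set Ω) (c : ℝ) :
    ∫ x in A, |(∫ y in A, g y ∂μ) / μ.real A - g x| ∂μ ≤ 2 * ∫ x in A, |g x - c| ∂μ := by
  have hgA : Integrable g (μ.restrict A) := hg.restrict
  have hgc : Integrable (fun x => g x - c) (μ.restrict A) := hgA.sub (integrable_const c)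
  set a : ℝ := (∫ y in A, g y ∂μ) / μ.real A with ha
  have h1 : μ.real A * |a - c| ≤ ∫ x in A, |g x - c| ∂μ := by
    rcases eq_or_ne (μ.real A) 0 with h0 | h0
    · rw [h0, zero_mul]
      exact integral_nonneg fun x => abs_nonneg _
    · have h2 : μ.real A * (a - c) = ∫ x in A, (g x - c) ∂μ := by
        rw [integral_sub hgA (integrable_const c), setIntegral_const, smul_eq_mul, ha]
        field_simp
      have h3 : μ.real A * |a - c| = |μ.real A * (a - c)| := by
        rw [abs_mul, abs_of_nonneg measureReal_nonneg]
      rw [h3, h2]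
      exact abs_integral_le_integral_abs
  calc ∫ x in A, |a - g x| ∂μ
      ≤ ∫ x in A, (|a - c| + |g x - c|) ∂μ := by
        refine integral_mono ((integrable_const a).sub hgA).abs
          ((integrable_const _).add hgc.abs) fun x => ?_
        show |a - g x| ≤ |a - c| + |g x - c|
        rw [abs_sub_comm (g x) c]
        exact abs_sub_le _ _ _
    _ = μ.real A * |a - c| + ∫ x in A, |g x - c| ∂μ := by
        rw [integral_add (integrable_const _) hgc.abs, setIntegral_const, smul_eq_mul]
    _ ≤ 2 * ∫ x in A, |g x - c| ∂μ := by linarith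

lemma integral_eq_sum_partition {Ω : Type*} [MeasurableSpace Ω] (μ : Measure Ω)
    {π : Finset (Set Ω)} (hπ : IsFinitePartition π) {f : Ω → ℝ}
    (hf : ∀ A ∈ π, IntegrableOn f A μ) :
    ∫ x, f x ∂μ = ∑ A ∈ π, ∫ x in A, f x ∂μ := by
  rw [← integral_biUnion_finset π hπ.1 hπ.2.1 hf, ← setIntegral_univ, ← hπ.2.2,
    Set.sUnion_eq_biUnion]
  simp

/-- The fibres of a simple function form a finite measurable partition. -/
lemma isFinitePartition_fibers {Ω : Type*} [MeasurableSpace Ω] (s : SimpleFunc Ω ℝ) :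
    IsFinitePartition (s.range.image fun c => s ⁻¹' {c}) := by
  refine ⟨?_, ?_, ?_⟩
  · intro A hA
    obtain ⟨c, -, rfl⟩ := Finset.mem_image.1 hA
    exact s.measurableSet_fiber c
  · intro A hA B hB hAB
    obtain ⟨c, -, rfl⟩ := Finset.mem_image.1 (Finset.mem_coe.1 hA)
    obtain ⟨d, -, rfl⟩ := Finset.mem_image.1 (Finset.mem_coe.1 hB)
    refine Set.disjoint_left.2 fun x hx hx' => hAB ?_
    have hc : s x = c := hx
    have hd : s x = d := hx'
    rw [← hc, ← hd]
  · refine Set.eq_univ_of_forall fun x => ⟨s ⁻¹' {s x}, ?_, rfl⟩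
    exact Finset.mem_coe.2 (Finset.mem_image_of_mem _ (s.mem_range_self x))

lemma exists_const_of_refines {Ω : Type*} [MeasurableSpace Ω] (s : SimpleFunc Ω ℝ)
    {π : Finset (Set Ω)} (hπ : IsFinitePartition π)
    (href : Refines π (s.range.image fun c => s ⁻¹' {c})) {A : Set Ω} (hA : A ∈ π) :
    ∃ c, ∀ x ∈ A, s x = c := by
  rcases A.eq_empty_or_nonempty with rfl | ⟨x, hx⟩
  · exact ⟨0, fun x hx => hx.elim⟩
  · refine ⟨s x, ?_⟩
    obtain ⟨S, hS, hSe⟩ := href (s ⁻¹' {s x}) (Finset.mem_image_of_mem _ (s.mem_range_self x))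
    have hxS : x ∈ ⋃₀ (S : Set (Set Ω)) := by
      rw [← hSe]
      exact rfl
    obtain ⟨B, hB, hxB⟩ := hxS
    -- `A` and `B` are pieces of `π` sharing the point `x`, hence equal.
    have hAB : A = B := by
      by_contra hne
      exact Set.disjoint_left.1 (hπ.2.1 hA (hS hB) hne) hx hxB
    intro y hy
    have hy' : y ∈ s ⁻¹' {s x} := by
      rw [hSe]
      exact ⟨B, hB, hAB ▸ hy⟩
    exact hy'

/-- Let `μ, ν` be finite measures on `(Ω, F)` with `ν ≪ μ`. Then the net `(f_π(μ))_π`, indexed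
by all finite measurable partitions of `Ω` ordered by refinement, converges to `dν/dμ` in
`L¹(μ)`: for every `ε > 0` there is a finite measurable partition `π₀` such that every finite
measurable partition `π` refining `π₀` satisfies `∫ |f_π(μ) - dν/dμ| dμ < ε`. -/
theorem stmt15 {Ω : Type*} [MeasurableSpace Ω] (μ ν : Measure Ω)
    [IsFiniteMeasure μ] [IsFiniteMeasure ν] (hac : ν ≪ μ) :
    ∀ ε > (0 : ℝ), ∃ π₀ : Finset (Set Ω), IsFinitePartition π₀ ∧
      ∀ π : Finset (Set Ω), IsFinitePartition π → Refines π π₀ →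
        ∫ x, |partFn ν μ π x - (ν.rnDeriv μ x).toReal| ∂μ < ε := by
  intro ε hε
  set g : Ω → ℝ := fun x => (ν.rnDeriv μ x).toReal with hgdef
  have hg : Integrable g μ := Measure.integrable_toReal_rnDeriv
  obtain ⟨s, hs, hsm⟩ := (memLp_one_iff_integrable.2 hg).exists_simpleFunc_eLpNorm_sub_lt
    ENNReal.one_ne_top (ε := ENNReal.ofReal (ε / 2))
    (ENNReal.ofReal_pos.2 (half_pos hε)).ne'
  have hgs : Integrable (fun x => g x - s x) μ := hg.sub (memLp_one_iff_integrable.1 hsm)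
  have hlt : ∫ x, |g x - s x| ∂μ < ε / 2 := by
    rw [eLpNorm_one_eq_lintegral_enorm] at hs
    have h := ofReal_integral_norm_eq_lintegral_enorm hgs
    have h' : ENNReal.ofReal (∫ x, ‖g x - s x‖ ∂μ) < ENNReal.ofReal (ε / 2) := by
      rw [h]
      exact hs
    exact (ENNReal.ofReal_lt_ofReal_iff (half_pos hε)).1 h'
  refine ⟨_, isFinitePartition_fibers s, fun π hπ href => ?_⟩
  have hpiece : ∀ A ∈ π, Set.EqOn (fun x => |(∫ y in A, g y ∂μ) / μ.real A - g x|)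
      (fun x => |partFn ν μ π x - g x|) A := by
    intro A hA x hx
    simp only [partFn_eq_of_mem ν μ hπ hA hx, hgdef, Measure.setIntegral_toReal_rnDeriv hac,
      measureReal_def]
  have hint : ∀ A ∈ π, IntegrableOn (fun x => |partFn ν μ π x - g x|) A μ := by
    intro A hA
    refine IntegrableOn.congr_fun ?_ (hpiece A hA) (hπ.1 A hA)
    exact ((integrable_const _).sub hg.restrict).abs
  calc ∫ x, |partFn ν μ π x - g x| ∂μ
      = ∑ A ∈ π, ∫ x in A, |partFn ν μ π x - g x| ∂μ := integral_eq_sum_partition μ hπ hint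
    _ ≤ ∑ A ∈ π, 2 * ∫ x in A, |g x - s x| ∂μ := by
        refine Finset.sum_le_sum fun A hA => ?_
        obtain ⟨c, hc⟩ := exists_const_of_refines s hπ href hA
        have hsc : ∫ x in A, |g x - s x| ∂μ = ∫ x in A, |g x - c| ∂μ :=
          setIntegral_congr_fun (hπ.1 A hA) fun x hx => by simp only [hc x hx]
        rw [← setIntegral_congr_fun (hπ.1 A hA) (hpiece A hA), hsc]
        exact setIntegral_abs_average_sub_le μ hg A c
    _ = 2 * ∫ x, |g x - s x| ∂μ := by
        rw [← Finset.mul_sum,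
          integral_eq_sum_partition μ hπ fun A _ => hgs.abs.integrableOn]
    _ < ε := by linarith
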